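/- (Chen–Yu) For every integer i ≥ 2, the length of the longest cycle in the Moon–Moser graph T_i is exactly 7·2^{i-2}; in particular, every cycle in T_i has length at most 7·2^{i-2}, and some cycle attains this length. -/

import Mathlib

/-- A state in the recursive construction of the Moon–Moser graphs `T_i`:
`faces` is the list of inner triangular faces (each a triple of vertices),
`next` is the label of the next vertex to be added (so the vertices used so far
are `0, 1, ..., next - 1`), and `edges` is the set of edges built so far. -/
structure MMState where
  faces : List (ℕ × ℕ × ℕ)
  next : ℕ
  edges : Finset (Sym2 ℕ)

/-- The initial state: `T_1 = K_4` on vertices `0, 1, 2, 3`, with outer triangle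
`x = 0`, `y = 1`, `z = 2`; its inner faces are the three triangles containing `3`. -/
def MMinit : MMState where
  faces := [(0, 1, 3), (0, 2, 3), (1, 2, 3)]
  next := 4
  edges := {s(0, 1), s(0, 2), s(0, 3), s(1, 2), s(1, 3), s(2, 3)}

/-- One step of the Moon–Moser construction: into each inner triangular face insert a
new vertex joined to the three vertices of that face; each face is replaced by three
new inner faces. -/
def MMstep (st : MMState) : MMState where
  faces := (st.faces.zipIdx.map (fun p =>
    let v := st.next + p.2
    [(p.1.1, p.1.2.1, v), (p.1.1, p.1.2.2, v), (p.1.2.1, p.1.2.2, v)])).flatten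
  next := st.next + st.faces.length
  edges := st.edges ∪ ((st.faces.zipIdx.map (fun p =>
    let v := st.next + p.2
    [s(p.1.1, v), s(p.1.2.1, v), s(p.1.2.2, v)])).flatten).toFinset

/-- The state after constructing `T_i` (for `i ≥ 1`). -/
def MMstate (i : ℕ) : MMState := MMstep^[i - 1] MMinit

/-- The number of vertices of the Moon–Moser graph `T_i` (its vertices being
`0, 1, ..., MMvertexCount i - 1`). -/
def MMvertexCount (i : ℕ) : ℕ := (MMstate i).next

/-- The Moon–Moser graph `T_i` (as a simple graph on `ℕ`); its outer triangle is
`x = 0`, `y = 1`, `z = 2`. -/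
def MoonMoser (i : ℕ) : SimpleGraph ℕ :=
  SimpleGraph.fromEdgeSet ((MMstate i).edges : Set (Sym2 ℕ))

/-- Adjacency in a state. -/
def MMrel (st : MMState) (a b : ℕ) : Prop := a ≠ b ∧ s(a, b) ∈ st.edges

/-- `Pth R x z l`: the list `x :: l` is an `R`-chain ending at `z`. -/
inductive Pth (R : ℕ → ℕ → Prop) : ℕ → ℕ → List ℕ → Prop
  | nil (x : ℕ) : Pth R x x []
  | cons {x y z : ℕ} {l : List ℕ} : R x y → Pth R y z l → Pth R x z (y :: l)

theorem Pth.snoc {R : ℕ → ℕ → Prop} {x z w : ℕ} {l : List ℕ} (h : Pth R x z l) (hR : R z w) :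
    Pth R x w (l ++ [w]) := by
  induction h with
  | nil x => exact .cons hR (.nil _)
  | cons h1 _ ih => exact .cons h1 (ih hR)

theorem Pth.mem_last {R : ℕ → ℕ → Prop} {x z : ℕ} {l : List ℕ} (h : Pth R x z l) :
    l ≠ [] → z ∈ l := by
  induction h with
  | nil x => simp
  | @cons x y z l h1 h2 ih =>
    intro _
    cases h2 with
    | nil => simp
    | cons h3 h4 => exact List.mem_cons_of_mem _ (ih (by simp))

theorem Pth.strict {R : ℕ → ℕ → Prop} {x z : ℕ} {l : List ℕ}
    (h : Pth (fun a b => R a b ∨ a = b) x z l) (hn : l.Nodup)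
    (hx : x ∉ l ∨ (z = x ∧ 2 ≤ l.length)) : Pth R x z l := by
  induction h with
  | nil x => exact .nil x
  | @cons x y z l h1 h2 ih =>
    rw [List.nodup_cons] at hn
    refine .cons ?_ (ih hn.2 (Or.inl hn.1))
    rcases h1 with h1 | rfl
    · exact h1
    · exfalso
      rcases hx with hx | ⟨rfl, hl⟩
      · simp at hx
      · apply hn.1
        apply h2.mem_last
        rintro rfl
        simp at hl

theorem Pth.reduce {R R' : ℕ → ℕ → Prop} {n : ℕ}
    (h1 : ∀ a b, R' a b → a < n → b < n → R a b)
    (h2 : ∀ a b c, R' a b → R' b c → n ≤ b → a < n ∧ c < n ∧ (R a c ∨ a = c)) :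
    ∀ (m : ℕ) (x z : ℕ) (l : List ℕ), l.length ≤ m → Pth R' x z l → x < n → z < n →
      Pth (fun a b => R a b ∨ a = b) x z (l.filter (· < n)) ∧
        l.length ≤ 2 * (l.filter (· < n)).length := by
  intro m
  induction m with
  | zero =>
    intro x z l hl h hx hz
    have : l = [] := by simpa using hl
    subst this
    cases h
    exact ⟨.nil _, by simp⟩
  | succ m ih =>
    intro x z l hl h hx hz
    cases h with
    | nil => exact ⟨.nil _, by simp⟩
    | @cons _ y _ l r h =>
      by_cases hy : y < n
      · obtain ⟨p, q⟩ := ih y z l (by simp at hl; omega) h hy hz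
        rw [List.filter_cons_of_pos (by simpa using hy)]
        refine ⟨.cons (Or.inl (h1 _ _ r hx hy)) p, ?_⟩
        simp only [List.length_cons]
        omega
      · cases h with
        | nil => exact absurd hz hy
        | @cons _ w _ l r' h =>
          obtain ⟨_, hw, hr⟩ := h2 _ _ _ r r' (by omega)
          obtain ⟨p, q⟩ := ih w z l (by simp at hl; omega) h hw hz
          rw [List.filter_cons_of_neg (by simpa using hy),
            List.filter_cons_of_pos (by simpa using hw)]
          refine ⟨.cons hr p, ?_⟩
          simp only [List.length_cons]
          omega

/-- The invariant of the construction. -/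
structure MMInv (st : MMState) : Prop where
  lt1 : ∀ f ∈ st.faces, f.1 < st.next
  lt2 : ∀ f ∈ st.faces, f.2.1 < st.next
  lt3 : ∀ f ∈ st.faces, f.2.2 < st.next
  e12 : ∀ f ∈ st.faces, s(f.1, f.2.1) ∈ st.edges
  e13 : ∀ f ∈ st.faces, s(f.1, f.2.2) ∈ st.edges
  e23 : ∀ f ∈ st.faces, s(f.2.1, f.2.2) ∈ st.edges
  elt : ∀ a b, s(a, b) ∈ st.edges → a < st.next

theorem mem_step_faces (st : MMState) (g : ℕ × ℕ × ℕ) :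
    g ∈ (MMstep st).faces ↔ ∃ (f : ℕ × ℕ × ℕ) (j : ℕ), st.faces[j]? = some f ∧
      (g = (f.1, f.2.1, st.next + j) ∨ g = (f.1, f.2.2, st.next + j) ∨
        g = (f.2.1, f.2.2, st.next + j)) := by
  unfold MMstep
  simp only [List.mem_flatten, List.mem_map]
  constructor
  · rintro ⟨l, ⟨p, hp, rfl⟩, hg⟩
    exact ⟨p.1, p.2, List.mem_zipIdx_iff_getElem?.1 hp, by simpa using hg⟩
  · rintro ⟨f, j, hj, hg⟩
    exact ⟨_, ⟨(f, j), List.mem_zipIdx_iff_getElem?.2 hj, rfl⟩, by simpa using hg⟩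

theorem mem_step_edges (st : MMState) (e : Sym2 ℕ) :
    e ∈ (MMstep st).edges ↔ e ∈ st.edges ∨ ∃ (f : ℕ × ℕ × ℕ) (j : ℕ),
      st.faces[j]? = some f ∧
      (e = s(f.1, st.next + j) ∨ e = s(f.2.1, st.next + j) ∨ e = s(f.2.2, st.next + j)) := by
  unfold MMstep
  simp only [Finset.mem_union, List.mem_toFinset, List.mem_flatten, List.mem_map]
  refine or_congr Iff.rfl ?_
  constructor
  · rintro ⟨l, ⟨p, hp, rfl⟩, hg⟩
    exact ⟨p.1, p.2, List.mem_zipIdx_iff_getElem?.1 hp, by simpa using hg⟩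
  · rintro ⟨f, j, hj, hg⟩
    exact ⟨_, ⟨(f, j), List.mem_zipIdx_iff_getElem?.2 hj, rfl⟩, by simpa using hg⟩

theorem step_next (st : MMState) : (MMstep st).next = st.next + st.faces.length := rfl

theorem MMInv.step {st : MMState} (h : MMInv st) : MMInv (MMstep st) := by
  have key : ∀ (f : ℕ × ℕ × ℕ) (j : ℕ), st.faces[j]? = some f →
      f ∈ st.faces ∧ j < st.faces.length := by
    intro f j hj
    refine ⟨List.mem_of_getElem? hj, ?_⟩
    exact (List.getElem?_eq_some_iff.1 hj).1
  constructor
  case elt =>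
    intro a b hab
    rw [step_next]
    rw [mem_step_edges] at hab
    rcases hab with hab | ⟨f, j, hj, hab⟩
    · have := h.elt a b hab
      omega
    · obtain ⟨hf, hl⟩ := key f j hj
      have := h.lt1 f hf
      have := h.lt2 f hf
      have := h.lt3 f hf
      simp only [Sym2.eq_iff] at hab
      omega
  all_goals
    intro g hg
    rw [mem_step_faces] at hg
    obtain ⟨f, j, hj, hg⟩ := hg
    obtain ⟨hf, hl⟩ := key f j hj
    have i1 := h.lt1 f hf
    have i2 := h.lt2 f hf
    have i3 := h.lt3 f hf
    have i4 := h.e12 f hf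
    have i5 := h.e13 f hf
    have i6 := h.e23 f hf
    first
    | rw [step_next]
      rcases hg with rfl | rfl | rfl <;> simp only <;> omega
    | rw [mem_step_edges]
      rcases hg with rfl | rfl | rfl <;> simp only <;>
      first
      | exact Or.inl i4
      | exact Or.inl i5
      | exact Or.inl i6
      | exact Or.inr ⟨f, j, hj, Or.inl rfl⟩
      | exact Or.inr ⟨f, j, hj, Or.inr (Or.inl rfl)⟩
      | exact Or.inr ⟨f, j, hj, Or.inr (Or.inr rfl)⟩

theorem MMInv.base : MMInv MMinit := by
  constructor <;> simp [MMinit]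
  omega

theorem MMInv.iter (k : ℕ) : MMInv (MMstep^[k] MMinit) := by
  induction k with
  | zero => exact MMInv.base
  | succ k ih => rw [Function.iterate_succ_apply']; exact ih.step

theorem MMrel.symm {st : MMState} {a b : ℕ} (h : MMrel st a b) : MMrel st b a :=
  ⟨h.1.symm, by rw [Sym2.eq_swap]; exact h.2⟩

/-- A neighbour of a new vertex lies on the face containing the new vertex. -/
theorem step_new {st : MMState} (h : MMInv st) {a b : ℕ} (hab : MMrel (MMstep st) a b)
    (hb : st.next ≤ b) :
    a < st.next ∧ ∃ f, st.faces[b - st.next]? = some f ∧ (a = f.1 ∨ a = f.2.1 ∨ a = f.2.2) := by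
  obtain ⟨_, he⟩ := hab
  rw [mem_step_edges] at he
  rcases he with he | ⟨f, j, hj, he⟩
  · rw [Sym2.eq_swap] at he
    have := h.elt _ _ he
    omega
  · have hf : f ∈ st.faces := List.mem_of_getElem? hj
    have i1 := h.lt1 f hf
    have i2 := h.lt2 f hf
    have i3 := h.lt3 f hf
    simp only [Sym2.eq_iff] at he
    have hbj : b - st.next = j := by omega
    refine ⟨by omega, f, by rw [hbj]; exact hj, by omega⟩

theorem step_old {st : MMState} {a b : ℕ} (hab : MMrel (MMstep st) a b)
    (ha : a < st.next) (hb : b < st.next) : MMrel st a b := by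
  obtain ⟨hn, he⟩ := hab
  rw [mem_step_edges] at he
  rcases he with he | ⟨f, j, hj, he⟩
  · exact ⟨hn, he⟩
  · simp only [Sym2.eq_iff] at he
    omega

theorem step_two {st : MMState} (h : MMInv st) {a b c : ℕ} (hab : MMrel (MMstep st) a b)
    (hbc : MMrel (MMstep st) b c) (hb : st.next ≤ b) :
    a < st.next ∧ c < st.next ∧ (MMrel st a c ∨ a = c) := by
  obtain ⟨ha, f, hf, hfa⟩ := step_new h hab hb
  obtain ⟨hc, g, hg, hgc⟩ := step_new h hbc.symm hb
  refine ⟨ha, hc, ?_⟩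
  rw [hf] at hg
  cases hg
  have hm : f ∈ st.faces := List.mem_of_getElem? hf
  by_cases hac : a = c
  · exact Or.inr hac
  · refine Or.inl ⟨hac, ?_⟩
    have i4 := h.e12 f hm
    have i5 := h.e13 f hm
    have i6 := h.e23 f hm
    rcases hfa with rfl | rfl | rfl <;> rcases hgc with rfl | rfl | rfl <;>
      first
      | exact absurd rfl hac
      | assumption
      | (rw [Sym2.eq_swap]; assumption)

theorem upper (k : ℕ) : ∀ (x : ℕ) (l : List ℕ), Pth (MMrel (MMstep^[k + 1] MMinit)) x x l →
    l.Nodup → l.length ≤ 7 * 2 ^ k := by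
  induction k with
  | zero =>
    intro x l h hn
    have hlt : ∀ (y z : ℕ) (l : List ℕ), Pth (MMrel (MMstep^[0 + 1] MMinit)) y z l → ∀ w ∈ l, w < 7 := by
      intro y z l h
      induction h with
      | nil => simp
      | cons r _ ih =>
        intro w hw
        rcases List.mem_cons.1 hw with rfl | hw
        · exact (MMInv.iter 1).elt _ _ r.symm.2
        · exact ih w hw
    have hs : l.toFinset ⊆ Finset.range 7 := by
      intro w hw
      simpa using hlt x x l h w (by simpa using hw)
    have := Finset.card_le_card hs
    rw [List.toFinset_card_of_nodup hn] at this
    simpa using this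
  | succ k ih =>
    intro x l h hn
    rw [Function.iterate_succ_apply'] at h
    have hI := MMInv.iter (k + 1)
    set st := MMstep^[k + 1] MMinit with hst
    have main : ∀ (x : ℕ) (l : List ℕ), Pth (MMrel (MMstep st)) x x l → l.Nodup →
        x < st.next → l.length ≤ 7 * 2 ^ (k + 1) := by
      intro x l h hn hx
      obtain ⟨p, q⟩ := Pth.reduce (R := MMrel st) (R' := MMrel (MMstep st)) (n := st.next)
        (fun a b h1 h2 h3 => step_old h1 h2 h3) (fun a b c h1 h2 h3 => step_two hI h1 h2 h3)
        l.length x x l le_rfl h hx hx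
      have hn' : (l.filter (· < st.next)).Nodup := hn.filter _
      have hpow : 1 ≤ 2 ^ k := Nat.one_le_two_pow
      have hpow2 : 2 ^ (k + 1) = 2 * 2 ^ k := by ring
      by_cases h2 : 2 ≤ (l.filter (· < st.next)).length
      · have := ih x _ (p.strict hn' (Or.inr ⟨rfl, h2⟩)) hn'
        omega
      · omega
    by_cases hx : x < st.next
    · exact main x l h hn hx
    · cases h with
      | nil => simp
      | @cons _ y _ l r h =>
        have hy := (step_new hI r.symm (by omega)).1
        have := main y (l ++ [y]) (h.snoc r) (by
          rw [List.nodup_cons] at hn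
          rw [List.nodup_append]
          refine ⟨hn.2, by simp, ?_⟩
          intro a ha b hb
          simp only [List.mem_singleton] at hb
          rintro rfl
          exact hn.1 (hb ▸ ha)) hy
        simpa using this

/-- The edge `xy` lies on the face `f`. -/
def OnFace (x y : ℕ) (f : ℕ × ℕ × ℕ) : Prop :=
  (x = f.1 ∧ y = f.2.1) ∨ (x = f.1 ∧ y = f.2.2) ∨ (x = f.2.1 ∧ y = f.2.2) ∨
  (y = f.1 ∧ x = f.2.1) ∨ (y = f.1 ∧ x = f.2.2) ∨ (y = f.2.1 ∧ x = f.2.2)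

/-- A chain in which each edge is assigned a face containing it. -/
inductive FP (st : MMState) : ℕ → ℕ → List ℕ → List (ℕ × ℕ × ℕ) → Prop
  | nil (x : ℕ) : FP st x x [] []
  | cons {x y z : ℕ} {l : List ℕ} {f : ℕ × ℕ × ℕ} {F : List (ℕ × ℕ × ℕ)} :
      x ≠ y → f ∈ st.faces → OnFace x y f → FP st y z l F → FP st x z (y :: l) (f :: F)

theorem OnFace.split {st : MMState} {x y : ℕ} {f : ℕ × ℕ × ℕ} (hxy : x ≠ y)
    (hf : f ∈ st.faces) (h : OnFace x y f) :
    ∃ g₁ ∈ (MMstep st).faces, ∃ g₂ ∈ (MMstep st).faces, g₁ ≠ g₂ ∧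
      g₁.2.2 = st.next + st.faces.idxOf f ∧ g₂.2.2 = st.next + st.faces.idxOf f ∧
      OnFace x (st.next + st.faces.idxOf f) g₁ ∧ OnFace (st.next + st.faces.idxOf f) y g₂ := by
  have hj : st.faces[st.faces.idxOf f]? = some f := by
    have := List.idxOf_lt_length_iff.2 hf
    rw [List.getElem?_eq_getElem this]
    simp
  set j := st.faces.idxOf f
  obtain ⟨a, b, c⟩ := f
  have m1 : (a, b, st.next + j) ∈ (MMstep st).faces :=
    (mem_step_faces _ _).2 ⟨_, j, hj, Or.inl rfl⟩
  have m2 : (a, c, st.next + j) ∈ (MMstep st).faces :=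
    (mem_step_faces _ _).2 ⟨_, j, hj, Or.inr (Or.inl rfl)⟩
  have m3 : (b, c, st.next + j) ∈ (MMstep st).faces :=
    (mem_step_faces _ _).2 ⟨_, j, hj, Or.inr (Or.inr rfl)⟩
  simp only [OnFace] at h
  rcases h with ⟨rfl, rfl⟩ | ⟨rfl, rfl⟩ | ⟨rfl, rfl⟩ | ⟨rfl, rfl⟩ | ⟨rfl, rfl⟩ | ⟨rfl, rfl⟩
  · refine ⟨_, m2, _, m3, ?_⟩
    simp [OnFace, hxy]
  · refine ⟨_, m1, _, m3, ?_⟩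
    simp [OnFace]; omega
  · refine ⟨_, m1, _, m2, ?_⟩
    simp [OnFace, hxy]
  · refine ⟨_, m3, _, m2, ?_⟩
    simp [OnFace, hxy]
  · refine ⟨_, m3, _, m1, ?_⟩
    simp [OnFace]; omega
  · refine ⟨_, m2, _, m1, ?_⟩
    simp [OnFace, hxy]

theorem FP.step {st : MMState} (hI : MMInv st) {x z : ℕ} {l : List ℕ} {F : List (ℕ × ℕ × ℕ)}
    (h : FP st x z l F) (hx : x < st.next) (hl : l.Nodup) (hF : F.Nodup) :
    ∃ l' F', FP (MMstep st) x z l' F' ∧ l'.length = 2 * l.length ∧ l'.Nodup ∧ F'.Nodup ∧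
      (∀ w ∈ l, w < st.next) ∧ (∀ f ∈ F, f ∈ st.faces) ∧
      (∀ w ∈ l', w ∈ l ∨ ∃ f ∈ F, w = st.next + st.faces.idxOf f) ∧
      (∀ g ∈ F', ∃ f ∈ F, g.2.2 = st.next + st.faces.idxOf f) := by
  induction h with
  | nil x => exact ⟨[], [], .nil x, by simp⟩
  | @cons x y z l f F hxy hf hon h ih =>
    rw [List.nodup_cons] at hl hF
    have hy : y < st.next := by
      have i1 := hI.lt1 f hf
      have i2 := hI.lt2 f hf
      have i3 := hI.lt3 f hf
      simp only [OnFace] at hon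
      omega
    obtain ⟨l', F', h', hlen, hln, hFn, hlt, hFm, hl', hF'⟩ := ih hy hl.2 hF.2
    obtain ⟨g₁, hg₁, g₂, hg₂, hne, e₁, e₂, o₁, o₂⟩ := hon.split hxy hf
    have hinj : ∀ f' ∈ F, st.faces.idxOf f ≠ st.faces.idxOf f' := by
      intro f' hf' he
      have := (List.idxOf_inj hf).1 he
      exact hF.1 (this ▸ hf')
    have hv : ∀ w ∈ l, w < st.next := hlt
    refine ⟨(st.next + st.faces.idxOf f) :: y :: l', g₁ :: g₂ :: F', ?_, ?_, ?_, ?_, ?_, ?_, ?_, ?_⟩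
    · exact .cons (by omega) hg₁ o₁ (.cons (by omega) hg₂ o₂ h')
    · simp only [List.length_cons]; omega
    · rw [List.nodup_cons, List.nodup_cons]
      refine ⟨?_, ?_, hln⟩
      · intro hm
        rcases List.mem_cons.1 hm with hm | hm
        · omega
        · rcases hl' _ hm with hm | ⟨f', hf', he⟩
          · have := hlt _ hm
            omega
          · exact hinj f' hf' (by omega)
      · intro hm
        rcases hl' _ hm with hm | ⟨f', hf', he⟩
        · exact hl.1 hm
        · omega
    · have hno : ∀ g, g.2.2 = st.next + st.faces.idxOf f → g ∉ F' := by
        intro g hg hm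
        obtain ⟨f', hf', he⟩ := hF' g hm
        exact hinj f' hf' (by omega)
      rw [List.nodup_cons, List.nodup_cons]
      refine ⟨?_, hno _ e₂, hFn⟩
      intro hm
      rcases List.mem_cons.1 hm with hm | hm
      · exact hne hm
      · exact hno _ e₁ hm
    · intro w hw
      rcases List.mem_cons.1 hw with rfl | hw
      · exact hy
      · exact hlt w hw
    · intro w hw
      rcases List.mem_cons.1 hw with rfl | hw
      · exact hf
      · exact hFm w hw
    · intro w hw
      rcases List.mem_cons.1 hw with rfl | hw
      · exact Or.inr ⟨f, by simp, rfl⟩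
      · rcases List.mem_cons.1 hw with rfl | hw
        · exact Or.inl (by simp)
        · rcases hl' w hw with hw | ⟨f', hf', he⟩
          · exact Or.inl (List.mem_cons_of_mem _ hw)
          · exact Or.inr ⟨f', List.mem_cons_of_mem _ hf', he⟩
    · intro g hg
      rcases List.mem_cons.1 hg with rfl | hg
      · exact ⟨f, by simp, e₁⟩
      · rcases List.mem_cons.1 hg with rfl | hg
        · exact ⟨f, by simp, e₂⟩
        · obtain ⟨f', hf', he⟩ := hF' g hg
          exact ⟨f', List.mem_cons_of_mem _ hf', he⟩

theorem lower (k : ℕ) : ∃ l F, FP (MMstep^[k + 1] MMinit) 0 0 l F ∧ l.Nodup ∧ F.Nodup ∧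
    l.length = 7 * 2 ^ k := by
  induction k with
  | zero =>
    refine ⟨[4, 1, 2, 6, 3, 5, 0],
      [(0, 1, 4), (1, 3, 4), (1, 2, 6), (2, 3, 6), (1, 3, 6), (2, 3, 5), (0, 2, 5)],
      ?_, by decide, by decide, by simp⟩
    have hfaces : (MMstep^[0 + 1] MMinit).faces = [(0, 1, 4), (0, 3, 4), (1, 3, 4),
        (0, 2, 5), (0, 3, 5), (2, 3, 5), (1, 2, 6), (1, 3, 6), (2, 3, 6)] := rfl
    repeat' first
      | exact FP.nil _
      | refine FP.cons (by decide) (by rw [hfaces]; decide) (by simp [OnFace]) ?_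
  | succ k ih =>
    obtain ⟨l, F, h, hl, hF, hlen⟩ := ih
    have hI := MMInv.iter (k + 1)
    have h0 : 0 < (MMstep^[k + 1] MMinit).next := by
      cases h with
      | nil => simp at hlen
      | cons _ hf _ _ => exact lt_of_le_of_lt (Nat.zero_le _) (hI.lt1 _ hf)
    obtain ⟨l', F', h', hlen', hln, hFn, _⟩ := h.step hI h0 hl hF
    refine ⟨l', F', ?_, hln, hFn, ?_⟩
    · rw [Function.iterate_succ_apply']; exact h'
    · rw [hlen', hlen]; ring

theorem MM_adj (k a b : ℕ) : (MoonMoser (k + 2)).Adj a b ↔ MMrel (MMstep^[k + 1] MMinit) a b := by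
  unfold MoonMoser MMrel MMstate
  rw [SimpleGraph.fromEdgeSet_adj]
  simp only [Nat.add_one_sub_one, Finset.mem_coe]
  exact and_comm

theorem FP.walk {k x z : ℕ} {l : List ℕ} {F : List (ℕ × ℕ × ℕ)}
    (h : FP (MMstep^[k + 1] MMinit) x z l F) :
    ∃ p : (MoonMoser (k + 2)).Walk x z, p.support = x :: l := by
  induction h with
  | nil x => exact ⟨.nil, rfl⟩
  | @cons x y z l f F hxy hf hon h ih =>
    obtain ⟨p, hp⟩ := ih
    have hI := MMInv.iter (k + 1)
    have hadj : (MoonMoser (k + 2)).Adj x y := by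
      rw [MM_adj]
      refine ⟨hxy, ?_⟩
      have i4 := hI.e12 f hf
      have i5 := hI.e13 f hf
      have i6 := hI.e23 f hf
      simp only [OnFace] at hon
      rcases hon with ⟨rfl, rfl⟩ | ⟨rfl, rfl⟩ | ⟨rfl, rfl⟩ | ⟨rfl, rfl⟩ | ⟨rfl, rfl⟩ | ⟨rfl, rfl⟩ <;>
      first
      | assumption
      | (rw [Sym2.eq_swap]; assumption)
    exact ⟨.cons hadj p, by simp [hp]⟩

theorem walk_Pth {k x z : ℕ} (p : (MoonMoser (k + 2)).Walk x z) :
    Pth (MMrel (MMstep^[k + 1] MMinit)) x z p.support.tail := by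
  induction p with
  | nil => exact .nil _
  | @cons u v w h p ih =>
    rw [SimpleGraph.Walk.support_cons, List.tail_cons, ← SimpleGraph.Walk.cons_tail_support]
    exact .cons ((MM_adj _ _ _).1 h) ih

/-- (Chen–Yu) For every integer `i ≥ 2`, the length of the longest cycle in the
Moon–Moser graph `T_i` is exactly `7·2^(i-2)`: every cycle in `T_i` has length at most
`7·2^(i-2)`, and some cycle attains this length. -/
theorem moonMoser_longest_cycle (i : ℕ) (hi : 2 ≤ i) :
    (∀ (v : ℕ) (c : (MoonMoser i).Walk v v), c.IsCycle → c.length ≤ 7 * 2 ^ (i - 2)) ∧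
    (∃ (v : ℕ) (c : (MoonMoser i).Walk v v), c.IsCycle ∧ c.length = 7 * 2 ^ (i - 2)) := by
  obtain ⟨k, rfl⟩ : ∃ k, i = k + 2 := ⟨i - 2, by omega⟩
  rw [Nat.add_sub_cancel]
  constructor
  · intro v c hc
    have := upper k v _ (walk_Pth c) hc.support_nodup
    simpa using this
  · obtain ⟨l, F, h, hl, hF, hlen⟩ := lower k
    obtain ⟨p, hp⟩ := h.walk
    have hpow : 1 ≤ 2 ^ k := Nat.one_le_two_pow
    have hplen : p.length = 7 * 2 ^ k := by
      have := p.length_support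
      rw [hp, List.length_cons] at this
      omega
    refine ⟨0, p, ?_, hplen⟩
    cases p with
    | nil => simp at hplen
    | @cons _ y _ hadj q =>
      rw [SimpleGraph.Walk.support_cons, List.cons.injEq] at hp
      have hq : q.IsPath := by
        rw [SimpleGraph.Walk.isPath_def, hp.2]; exact hl
      rw [SimpleGraph.Walk.cons_isCycle_iff]
      refine ⟨hq, ?_⟩
      intro hm
      rw [SimpleGraph.Walk.length_cons] at hplen
      rw [Sym2.eq_swap] at hm
      have := hq.length_eq_one_of_mem_edges hm
      omega
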